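/- For the layered medium, define the fast-variable functions A = ⟦K⁻¹K_h − ρ⁻¹ρ_h⟧, B = ⟦K⁻¹K_h⟧, C = ⟦ρ ρ_m⁻¹⟧, D = ⟦K⁻¹K_h C − ρ⁻¹ρ_h C − A⟧, E = ⟦K⁻¹K_h C − B⟧. Then the homogenization coefficients γ₁ := ρ_m⁻¹⟨ρE⟩ and γ₂ := ρ_h⁻¹⟨ρD⟩ satisfy γ₁ = −(ρ_A − ρ_B)(Z_A² − Z_B²) λ² / (192 K_m ρ_m²) and γ₂ = −(ρ_A − ρ_B)(c_A² − c_B²) λ² / (192 K_m). -/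

import Mathlib

/-!
The bracket `⟦·⟧` is skew-adjoint for the cell average, so `⟨(ρ/ρ_m) ⟦a⟧⟩ = -⟨C a⟩` and the second
correctors `D` and `E` never have to be computed. Every first-order corrector (`A`, `B`, `C`) is
the bracket of a function that is constant on each of two layers of equal width, hence half the
jump of that function times one fixed triangular wave `T`. As `T` is symmetric about the middle of
the period, a layered weight enters `⟨P T²⟩` only through its mean, and both coefficients reduce to
`⟨T²⟩ = λ² / 48`.
-/

open MeasureTheory

/-- `IsBracket lam a F` says that `F` is the function `⟦a⟧`: the unique continuous
`lam`-periodic function with zero mean satisfying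
`F(ŷ) = F(0) + ∫₀^ŷ (a(ξ) − ⟨a⟩) dξ` for all `ŷ`. -/
def IsBracket (lam : ℝ) (a F : ℝ → ℝ) : Prop :=
  Continuous F ∧ (∀ y, F (y + lam) = F y) ∧
  (1 / lam) * (∫ y in (0:ℝ)..lam, F y) = 0 ∧
  ∀ yh : ℝ, F yh = F 0 + ∫ ξ in (0:ℝ)..yh,
    (a ξ - (1 / lam) * ∫ s in (0:ℝ)..lam, a s)

open Set intervalIntegral

namespace IsBracket

variable {lam : ℝ} {f g F G : ℝ → ℝ}

theorem integral_eq_zero (hF : IsBracket lam f F) : ∫ y in (0 : ℝ)..lam, F y = 0 := by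
  rcases eq_or_ne lam 0 with rfl | hlam
  · exact integral_same
  · exact (mul_eq_zero.mp hF.2.2.1).resolve_left (one_div_ne_zero hlam)

theorem apply_period (hF : IsBracket lam f F) : F lam = F 0 := by
  simpa only [zero_add] using hF.2.1 0

theorem absolutelyContinuousOnInterval (hF : IsBracket lam f F)
    (hf : IntervalIntegrable f volume 0 lam) : AbsolutelyContinuousOnInterval F 0 lam := by
  have hprim := (hf.sub (intervalIntegrable_const (c := (1 / lam) * ∫ s in (0 : ℝ)..lam, f s))
    ).absolutelyContinuousOnInterval_intervalIntegral left_mem_uIcc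
  have hconst := ((LipschitzWith.const (F 0)).lipschitzOnWith
    (s := uIcc 0 lam)).absolutelyContinuousOnInterval
  rw [funext hF.2.2.2]
  exact hconst.add hprim

theorem ae_deriv_eq (hF : IsBracket lam f F) (hf : IntervalIntegrable f volume 0 lam) :
    ∀ᵐ y, y ∈ uIcc 0 lam → deriv F y = f y - (1 / lam) * ∫ s in (0 : ℝ)..lam, f s := by
  filter_upwards [(hf.sub intervalIntegrable_const).ae_hasDerivAt_integral] with y hderiv hy
  rw [funext hF.2.2.2]
  exact ((hderiv hy 0 left_mem_uIcc).const_add (F 0)).deriv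

theorem integral_deriv_mul (hF : IsBracket lam f F) (hf : IntervalIntegrable f volume 0 lam)
    (hG : ContinuousOn G (uIcc 0 lam)) (hG₀ : ∫ y in (0 : ℝ)..lam, G y = 0) :
    ∫ y in (0 : ℝ)..lam, deriv F y * G y = ∫ y in (0 : ℝ)..lam, f y * G y := by
  set m := (1 / lam) * ∫ s in (0 : ℝ)..lam, f s
  calc ∫ y in (0 : ℝ)..lam, deriv F y * G y
      = ∫ y in (0 : ℝ)..lam, (f y * G y - m * G y) := by
        refine integral_congr_ae ?_
        filter_upwards [hF.ae_deriv_eq hf] with y hderiv hy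
        rw [hderiv (uIoc_subset_uIcc hy), sub_mul]
    _ = ∫ y in (0 : ℝ)..lam, f y * G y := by
        rw [integral_sub (hf.mul_continuousOn hG) (hG.intervalIntegrable.const_mul m),
          intervalIntegral.integral_const_mul, hG₀, mul_zero, sub_zero]

theorem integral_mul_eq_neg_integral_mul (hF : IsBracket lam f F) (hG : IsBracket lam g G)
    (hf : IntervalIntegrable f volume 0 lam) (hg : IntervalIntegrable g volume 0 lam) :
    ∫ y in (0 : ℝ)..lam, f y * G y = -∫ y in (0 : ℝ)..lam, F y * g y :=
  calc ∫ y in (0 : ℝ)..lam, f y * G y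
      = ∫ y in (0 : ℝ)..lam, deriv F y * G y :=
        (hF.integral_deriv_mul hf hG.1.continuousOn hG.integral_eq_zero).symm
    _ = -∫ y in (0 : ℝ)..lam, F y * deriv G y := by
        rw [(hF.absolutelyContinuousOnInterval hf).integral_mul_deriv_eq_deriv_mul
          (hG.absolutelyContinuousOnInterval hg), hF.apply_period, hG.apply_period]
        ring
    _ = -∫ y in (0 : ℝ)..lam, F y * g y := by
        have hderiv := hG.integral_deriv_mul hg hF.1.continuousOn hF.integral_eq_zero
        simp only [mul_comm (F _), hderiv]

end IsBracket

theorem integral_right_half_of_symm {X : Type*} [NormedAddCommGroup X] [NormedSpace ℝ X]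
    {lam : ℝ} {h : ℝ → X} (hsymm : ∀ y, h (lam - y) = h y) :
    ∫ y in (lam / 2)..lam, h y = ∫ y in (0 : ℝ)..(lam / 2), h y := by
  calc ∫ y in (lam / 2)..lam, h y
      = ∫ y in (lam / 2)..lam, h (lam - y) := by simp only [hsymm]
    _ = ∫ y in (0 : ℝ)..(lam / 2), h y := by rw [integral_comp_sub_left, sub_self, sub_half]

/-- The triangular wave on the period `[0, lam]`: it has zero mean, slope `1` on the first layer
and slope `-1` on the second. Outside `[0, lam]` it is not the periodic extension. -/
noncomputable def triangleWave (lam y : ℝ) : ℝ := lam / 4 - |y - lam / 2|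

namespace triangleWave

theorem continuous (lam : ℝ) : Continuous (triangleWave lam) := by
  unfold triangleWave
  fun_prop

theorem apply_sub (lam y : ℝ) : triangleWave lam (lam - y) = triangleWave lam y := by
  rw [triangleWave, triangleWave, abs_sub_comm y, sub_right_comm, sub_half]

theorem eq_left {lam y : ℝ} (hy : y ≤ lam / 2) : triangleWave lam y = y - lam / 4 := by
  rw [triangleWave, abs_of_nonpos (sub_nonpos.mpr hy)]
  ring

theorem eq_right {lam y : ℝ} (hy : lam / 2 ≤ y) : triangleWave lam y = 3 * lam / 4 - y := by
  rw [triangleWave, abs_of_nonneg (sub_nonneg.mpr hy)]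
  ring

theorem integral_pow {lam : ℝ} (hlam : 0 ≤ lam) (n : ℕ) :
    ∫ y in (0 : ℝ)..lam, triangleWave lam y ^ n
      = 2 * (((lam / 4) ^ (n + 1) - (-(lam / 4)) ^ (n + 1)) / (n + 1)) := by
  have hcont : Continuous fun y => triangleWave lam y ^ n := (continuous lam).pow n
  have hleft : ∫ y in (0 : ℝ)..(lam / 2), triangleWave lam y ^ n
      = ((lam / 4) ^ (n + 1) - (-(lam / 4)) ^ (n + 1)) / (n + 1) := by
    calc ∫ y in (0 : ℝ)..(lam / 2), triangleWave lam y ^ n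
        = ∫ y in (0 : ℝ)..(lam / 2), (y - lam / 4) ^ n :=
          integral_congr_Ioo_of_le (by positivity) fun y hy => by
            simp only [eq_left hy.2.le]
      _ = ((lam / 4) ^ (n + 1) - (-(lam / 4)) ^ (n + 1)) / (n + 1) := by
          rw [integral_comp_sub_right fun y => y ^ n, _root_.integral_pow]
          ring_nf
  rw [← integral_add_adjacent_intervals (hcont.intervalIntegrable 0 (lam / 2))
    (hcont.intervalIntegrable (lam / 2) lam),
    integral_right_half_of_symm fun y => by rw [apply_sub], hleft, two_mul]

theorem integral_eq_zero {lam : ℝ} (hlam : 0 ≤ lam) :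
    ∫ y in (0 : ℝ)..lam, triangleWave lam y = 0 := by
  simpa using integral_pow hlam 1

theorem integral_sq {lam : ℝ} (hlam : 0 ≤ lam) :
    ∫ y in (0 : ℝ)..lam, triangleWave lam y ^ 2 = lam ^ 3 / 48 := by
  rw [integral_pow hlam]
  norm_num
  ring

end triangleWave

/-- The function `f` is layered: on the period `[0, lam)` it takes the value `a` on the first half
and the value `b` on the second. -/
def IsLayered {α : Type*} (lam : ℝ) (a b : α) (f : ℝ → α) : Prop :=
  (∀ y ∈ Ico 0 (lam / 2), f y = a) ∧ ∀ y ∈ Ico (lam / 2) lam, f y = b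

namespace IsLayered

theorem map {α β : Type*} {lam : ℝ} {a b : α} {f : ℝ → α} (hf : IsLayered lam a b f)
    (φ : α → β) : IsLayered lam (φ a) (φ b) fun y => φ (f y) :=
  ⟨fun y hy => congrArg φ (hf.1 y hy), fun y hy => congrArg φ (hf.2 y hy)⟩

theorem map₂ {α β γ : Type*} {lam : ℝ} {a b : α} {c d : β} {f : ℝ → α} {g : ℝ → β}
    (hf : IsLayered lam a b f) (hg : IsLayered lam c d g) (φ : α → β → γ) :
    IsLayered lam (φ a c) (φ b d) fun y => φ (f y) (g y) :=
  ⟨fun y hy => congrArg₂ φ (hf.1 y hy) (hg.1 y hy),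
    fun y hy => congrArg₂ φ (hf.2 y hy) (hg.2 y hy)⟩

variable {lam a b : ℝ} {f F : ℝ → ℝ}

theorem eqOn_left (hlam : 0 ≤ lam) (hf : IsLayered lam a b f) :
    EqOn (fun _ => a) f (uIoo 0 (lam / 2)) := by
  rw [uIoo_of_le (by positivity)]
  exact fun y hy => (hf.1 y ⟨hy.1.le, hy.2⟩).symm

theorem eqOn_right (hlam : 0 ≤ lam) (hf : IsLayered lam a b f) :
    EqOn (fun _ => b) f (uIoo (lam / 2) lam) := by
  rw [uIoo_of_le (half_le_self hlam)]
  exact fun y hy => (hf.2 y ⟨hy.1.le, hy.2⟩).symm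

theorem intervalIntegrable (hlam : 0 ≤ lam) (hf : IsLayered lam a b f) :
    IntervalIntegrable f volume 0 lam :=
  (intervalIntegrable_const.congr_uIoo (hf.eqOn_left hlam)).trans
    (intervalIntegrable_const.congr_uIoo (hf.eqOn_right hlam))

theorem integral_mul_of_symm {h : ℝ → ℝ} (hlam : 0 ≤ lam) (hf : IsLayered lam a b f)
    (hh : IntervalIntegrable h volume 0 lam) (hsymm : ∀ y, h (lam - y) = h y) :
    ∫ y in (0 : ℝ)..lam, f y * h y = (a + b) / 2 * ∫ y in (0 : ℝ)..lam, h y := by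
  have hleft : EqOn (fun y => a * h y) (fun y => f y * h y) (uIoo 0 (lam / 2)) :=
    fun y hy => congrArg (· * h y) (hf.eqOn_left hlam hy)
  have hright : EqOn (fun y => b * h y) (fun y => f y * h y) (uIoo (lam / 2) lam) :=
    fun y hy => congrArg (· * h y) (hf.eqOn_right hlam hy)
  have hmid : lam / 2 ∈ uIcc 0 lam := Icc_subset_uIcc ⟨by positivity, half_le_self hlam⟩
  have hint_left := hh.mono_set (uIcc_subset_uIcc_left hmid)
  have hint_right := hh.mono_set (uIcc_subset_uIcc_right hmid)
  rw [← integral_add_adjacent_intervals ((hint_left.const_mul a).congr_uIoo hleft)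
      ((hint_right.const_mul b).congr_uIoo hright),
    ← integral_congr_uIoo hleft, ← integral_congr_uIoo hright,
    ← integral_add_adjacent_intervals hint_left hint_right,
    intervalIntegral.integral_const_mul, intervalIntegral.integral_const_mul,
    integral_right_half_of_symm hsymm]
  ring

theorem average_eq (hlam : 0 < lam) (hf : IsLayered lam a b f) :
    (1 / lam) * ∫ y in (0 : ℝ)..lam, f y = (a + b) / 2 := by
  have hint : ∫ y in (0 : ℝ)..lam, f y = (a + b) / 2 * lam := by
    simpa using hf.integral_mul_of_symm hlam.le (intervalIntegrable_const (c := 1)) fun _ => rfl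
  rw [hint]
  field_simp

theorem hasDerivAt_mul_triangleWave (hf : IsLayered lam a b f) {y : ℝ} (hy : y ∈ Ioo 0 lam)
    (hmid : y ≠ lam / 2) :
    HasDerivAt (fun s => (a - b) / 2 * triangleWave lam s) (f y - (a + b) / 2) y := by
  rcases hmid.lt_or_gt with hlt | hgt
  · have hT : HasDerivAt (triangleWave lam) 1 y :=
      ((hasDerivAt_id y).sub_const (lam / 4)).congr_of_eventuallyEq <|
        (eventually_lt_nhds hlt).mono fun s hs => triangleWave.eq_left hs.le
    rw [hf.1 y ⟨hy.1.le, hlt⟩]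
    exact (hT.const_mul _).congr_deriv (by ring)
  · have hT : HasDerivAt (triangleWave lam) (-1) y :=
      ((hasDerivAt_id y).const_sub (3 * lam / 4)).congr_of_eventuallyEq <|
        (eventually_gt_nhds hgt).mono fun s hs => triangleWave.eq_right hs.le
    rw [hf.2 y ⟨hgt.le, hy.2⟩]
    exact (hT.const_mul _).congr_deriv (by ring)

theorem integral_sub_average (hf : IsLayered lam a b f) {y : ℝ} (hy : y ∈ Icc 0 lam) :
    ∫ s in (0 : ℝ)..y, (f s - (a + b) / 2)
      = (a - b) / 2 * triangleWave lam y - (a - b) / 2 * triangleWave lam 0 := by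
  have hint : IntervalIntegrable f volume 0 y :=
    (hf.intervalIntegrable (hy.1.trans hy.2)).mono_set (uIcc_subset_uIcc_left (Icc_subset_uIcc hy))
  exact integral_eq_of_hasDerivAt_off_countable_of_le _ _ hy.1 (countable_singleton (lam / 2))
    ((triangleWave.continuous lam).const_mul _).continuousOn
    (fun s hs => hf.hasDerivAt_mul_triangleWave ⟨hs.1.1, hs.1.2.trans_le hy.2⟩ hs.2)
    (hint.sub intervalIntegrable_const)

theorem bracket_eqOn (hlam : 0 < lam) (hf : IsLayered lam a b f) (hF : IsBracket lam f F) :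
    EqOn F (fun y => (a - b) / 2 * triangleWave lam y) (uIcc 0 lam) := by
  rw [uIcc_of_le hlam.le]
  obtain ⟨c, hc⟩ : ∃ c, ∀ y ∈ Icc 0 lam, F y = c + (a - b) / 2 * triangleWave lam y := by
    refine ⟨F 0 - (a - b) / 2 * triangleWave lam 0, fun y hy => ?_⟩
    rw [hF.2.2.2 y, hf.average_eq hlam, hf.integral_sub_average hy]
    ring
  have hc₀ : c * lam = 0 :=
    calc c * lam = ∫ y in (0 : ℝ)..lam, (c + (a - b) / 2 * triangleWave lam y) := by
          rw [integral_add intervalIntegrable_const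
              (((triangleWave.continuous lam).const_mul _).intervalIntegrable _ _),
            intervalIntegral.integral_const, intervalIntegral.integral_const_mul,
            triangleWave.integral_eq_zero hlam.le, sub_zero, smul_eq_mul]
          ring
      _ = ∫ y in (0 : ℝ)..lam, F y := by
          refine (integral_congr fun y hy => hc y ?_).symm
          rwa [uIcc_of_le hlam.le] at hy
      _ = 0 := hF.integral_eq_zero
  intro y hy
  rw [hc y hy, (mul_eq_zero.mp hc₀).resolve_right hlam.ne', zero_add]

theorem integral_mul_triangleWave_sq (hlam : 0 ≤ lam) (hf : IsLayered lam a b f) :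
    ∫ y in (0 : ℝ)..lam, f y * triangleWave lam y ^ 2 = (a + b) / 2 * (lam ^ 3 / 48) := by
  have hT_sq : Continuous fun y => triangleWave lam y ^ 2 := (triangleWave.continuous lam).pow 2
  rw [hf.integral_mul_of_symm hlam (hT_sq.intervalIntegrable 0 lam)
    fun y => by rw [triangleWave.apply_sub], triangleWave.integral_sq hlam]

/-- Both `E` and `D` have the form `⟦P C - ⟦P⟧⟧` with `P` layered: `P = K_h/K` gives `E`, and
`P = K_h/K - ρ_h/ρ` gives `D`. -/
theorem average_mul_second_corrector {r s p q : ℝ} {R P C B E : ℝ → ℝ} (hlam : 0 < lam)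
    (hR : IsLayered lam r s R) (hP : IsLayered lam p q P)
    (hC : IsBracket lam R C) (hB : IsBracket lam P B)
    (hE : IsBracket lam (fun y => P y * C y - B y) E) :
    (1 / lam) * ∫ y in (0 : ℝ)..lam, R y * E y
      = lam ^ 2 / 48 * ((r - s) / 2) * ((p - q) / 2 - (p + q) / 2 * ((r - s) / 2)) := by
  set T := triangleWave lam
  have hT_sq : Continuous fun y => T y ^ 2 := (triangleWave.continuous lam).pow 2
  have hRint := hR.intervalIntegrable hlam.le
  have hPint := hP.intervalIntegrable hlam.le
  have hsource : IntervalIntegrable (fun y => P y * C y - B y) volume 0 lam :=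
    (hPint.mul_continuousOn hC.1.continuousOn).sub (hB.1.intervalIntegrable _ _)
  have hint : ∫ y in (0 : ℝ)..lam, R y * E y
      = lam ^ 3 / 48 * ((r - s) / 2) * ((p - q) / 2 - (p + q) / 2 * ((r - s) / 2)) := by
    calc ∫ y in (0 : ℝ)..lam, R y * E y
        = -∫ y in (0 : ℝ)..lam, C y * (P y * C y - B y) :=
          hC.integral_mul_eq_neg_integral_mul hE hRint hsource
      _ = -∫ y in (0 : ℝ)..lam,
            (((r - s) / 2) ^ 2 * (P y * T y ^ 2) - (r - s) / 2 * ((p - q) / 2) * T y ^ 2) := by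
          refine congrArg Neg.neg (integral_congr fun y hy => ?_)
          simp only [hR.bracket_eqOn hlam hC hy, hP.bracket_eqOn hlam hB hy]
          ring
      _ = lam ^ 3 / 48 * ((r - s) / 2) * ((p - q) / 2 - (p + q) / 2 * ((r - s) / 2)) := by
          rw [integral_sub ((hPint.mul_continuousOn hT_sq.continuousOn).const_mul _)
              ((hT_sq.const_mul _).intervalIntegrable _ _),
            intervalIntegral.integral_const_mul, intervalIntegral.integral_const_mul,
            hP.integral_mul_triangleWave_sq hlam.le, triangleWave.integral_sq hlam.le]
          ring
  rw [hint]
  field_simp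

end IsLayered

/-- For the layered medium, with the fast-variable functions
`A = ⟦K⁻¹K_h − ρ⁻¹ρ_h⟧`, `B = ⟦K⁻¹K_h⟧`, `C = ⟦ρ ρ_m⁻¹⟧`,
`D = ⟦K⁻¹K_h C − ρ⁻¹ρ_h C − A⟧`, `E = ⟦K⁻¹K_h C − B⟧`, the homogenization coefficients
`γ₁ = ρ_m⁻¹⟨ρE⟩` and `γ₂ = ρ_h⁻¹⟨ρD⟩` have the closed forms
`γ₁ = −(ρ_A − ρ_B)(Z_A² − Z_B²)λ²/(192 K_m ρ_m²)` and
`γ₂ = −(ρ_A − ρ_B)(c_A² − c_B²)λ²/(192 K_m)`. -/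
theorem layered_gamma_coefficients
    (lam KA KB ρA ρB : ℝ)
    (hlam : 0 < lam) (hKA : 0 < KA) (hKB : 0 < KB) (hρA : 0 < ρA) (hρB : 0 < ρB)
    (K ρ : ℝ → ℝ)
    (hK_per : ∀ y, K (y + lam) = K y) (hρ_per : ∀ y, ρ (y + lam) = ρ y)
    (hKvalA : ∀ y ∈ Set.Ico (0:ℝ) (lam / 2), K y = KA)
    (hKvalB : ∀ y ∈ Set.Ico (lam / 2) lam, K y = KB)
    (hρvalA : ∀ y ∈ Set.Ico (0:ℝ) (lam / 2), ρ y = ρA)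
    (hρvalB : ∀ y ∈ Set.Ico (lam / 2) lam, ρ y = ρB)
    (Km ρm Kh ρh ZA ZB cA cB : ℝ)
    (hKm : Km = (KA + KB) / 2) (hρm : ρm = (ρA + ρB) / 2)
    (hKh : Kh = ((1 / lam) * ∫ y in (0:ℝ)..lam, (K y)⁻¹)⁻¹)
    (hρh : ρh = ((1 / lam) * ∫ y in (0:ℝ)..lam, (ρ y)⁻¹)⁻¹)
    (hZA : ZA = Real.sqrt (KA * ρA)) (hZB : ZB = Real.sqrt (KB * ρB))
    (hcA : cA = Real.sqrt (KA / ρA)) (hcB : cB = Real.sqrt (KB / ρB))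
    (A B C D E : ℝ → ℝ)
    (hA : IsBracket lam (fun yh => Kh / K yh - ρh / ρ yh) A)
    (hB : IsBracket lam (fun yh => Kh / K yh) B)
    (hC : IsBracket lam (fun yh => ρ yh / ρm) C)
    (hD : IsBracket lam (fun yh => Kh / K yh * C yh - ρh / ρ yh * C yh - A yh) D)
    (hE : IsBracket lam (fun yh => Kh / K yh * C yh - B yh) E) :
    ρm⁻¹ * ((1 / lam) * ∫ y in (0:ℝ)..lam, ρ y * E y)
      = -((ρA - ρB) * (ZA ^ 2 - ZB ^ 2) * lam ^ 2) / (192 * Km * ρm ^ 2)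
    ∧ ρh⁻¹ * ((1 / lam) * ∫ y in (0:ℝ)..lam, ρ y * D y)
      = -((ρA - ρB) * (cA ^ 2 - cB ^ 2) * lam ^ 2) / (192 * Km) := by
  have hK : IsLayered lam KA KB K := ⟨hKvalA, hKvalB⟩
  have hρ : IsLayered lam ρA ρB ρ := ⟨hρvalA, hρvalB⟩
  have hKratio := hK.map (Kh / ·)
  have hρratio := hρ.map (ρh / ·)
  have hρ_scaled := hρ.map (· / ρm)
  have hE_average := hρ_scaled.average_mul_second_corrector hlam hKratio hC hB hE
  have hD_average := hρ_scaled.average_mul_second_corrector hlam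
    (hKratio.map₂ hρratio (· - ·)) hC hA (by simpa only [sub_mul] using hD)
  have hρm_pos : 0 < ρm := by rw [hρm]; positivity
  have hscale (F : ℝ → ℝ) : (1 / lam) * ∫ y in (0 : ℝ)..lam, ρ y * F y
      = ρm * ((1 / lam) * ∫ y in (0 : ℝ)..lam, ρ y / ρm * F y) := by
    simp only [div_mul_eq_mul_div, intervalIntegral.integral_div]
    field_simp
  rw [hscale, hscale, hE_average, hD_average, hZA, hZB, hcA, hcB, Real.sq_sqrt (by positivity),
    Real.sq_sqrt (by positivity), Real.sq_sqrt (by positivity), Real.sq_sqrt (by positivity),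
    hKh, hρh, (hK.map (·⁻¹)).average_eq hlam, (hρ.map (·⁻¹)).average_eq hlam, hKm, hρm]
  constructor <;> field_simp <;> ring
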